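/- Let ν > 0, κ > 0, γ > 1. Let ρ : ℝ × ℝ³ → ℝ and u : ℝ × ℝ³ → ℝ³ be C³ functions with ρ > 0 everywhere, satisfying pointwise the Navier–Stokes–Korteweg system: ∂_t ρ + div(ρ u) = 0 and ∂_t(ρ u) + div(ρ u ⊗ u) + ∇(ρ^γ) − 2ν div(ρ Du) − 2κ² ρ ∇(Δρ) = 0. Define v = 2ν ∇(log ρ) and the effective velocity w = u + v. Then w satisfies pointwise the augmented momentum equation ∂_t(ρ w) + div(ρ w ⊗ u) + ∇(ρ^γ) − 2ν div(ρ Au) − 2κ² ρ ∇(Δρ) = 0, and moreover Aw = Au (the antisymmetric parts of ∇w and ∇u coincide). -/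

import Mathlib

open scoped BigOperators
open MeasureTheory

noncomputable section

/-- Points of `ℝ³`, realized as `Fin 3 → ℝ`. -/
abbrev V3 : Type := Fin 3 → ℝ

/-- Partial derivative `∂ᵢ f` of a scalar field. -/
def pd (i : Fin 3) (f : V3 → ℝ) (x : V3) : ℝ := fderiv ℝ f x (Pi.single i 1)

/-- Gradient `∇f` of a scalar field. -/
def grad (f : V3 → ℝ) (x : V3) : V3 := fun i => pd i f x

/-- Divergence `div u` of a vector field. -/
def vdiv (u : V3 → V3) (x : V3) : ℝ := ∑ i, pd i (fun y => u y i) x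

/-- Laplacian `Δf` of a scalar field. -/
def lap (f : V3 → ℝ) (x : V3) : ℝ := ∑ i, pd i (fun y => pd i f y) x

/-- Divergence (row-wise) of a matrix field: `(div M)_i = ∑_j ∂_j M_{ij}`. -/
def mdiv (M : V3 → Fin 3 → Fin 3 → ℝ) (x : V3) : V3 :=
  fun i => ∑ j, pd j (fun y => M y i j) x

/-- Jacobian matrix `(∇u)_{ij} = ∂_j u_i` of a vector field. -/
def jacb (u : V3 → V3) (x : V3) : Fin 3 → Fin 3 → ℝ := fun i j => pd j (fun y => u y i) x

/-- Symmetric part `Du = (∇u + ∇ᵀu)/2` of the Jacobian. -/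
def symJ (u : V3 → V3) (x : V3) : Fin 3 → Fin 3 → ℝ :=
  fun i j => (jacb u x i j + jacb u x j i) / 2

/-- Antisymmetric part `Au = (∇u − ∇ᵀu)/2` of the Jacobian. -/
def asymJ (u : V3 → V3) (x : V3) : Fin 3 → Fin 3 → ℝ :=
  fun i j => (jacb u x i j - jacb u x j i) / 2

/-- Euclidean dot product on `ℝ³`. -/
def dot (a b : V3) : ℝ := ∑ i, a i * b i

/-- Squared Euclidean norm on `ℝ³`. -/
def normSq (a : V3) : ℝ := ∑ i, (a i) ^ 2

/-!
The flux of the effective velocity is `ρ w = ρ u + 2ν ∇ρ`, because `ρ ∇ log ρ = ∇ρ`. Taking the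
gradient of the continuity equation gives an evolution equation for `∇ρ`,
`∂ₜ ∇ρ + div(∇ρ ⊗ u) + div(ρ ∇ᵀu) = 0`, and `2ν` times it, added to the momentum equation, turns
`ρ Du` into `ρ Du - ρ ∇ᵀu = ρ Au`. The identity `Aw = Au` holds because gradients are curl-free.
-/

section Slices

variable {𝕜 E F G : Type*} [NontriviallyNormedField 𝕜] [NormedAddCommGroup E] [NormedSpace 𝕜 E]
  [NormedAddCommGroup F] [NormedSpace 𝕜 F] [NormedAddCommGroup G] [NormedSpace 𝕜 G]

lemma fderiv_slice_right {f : E → F → G} {t : E} {x : F}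
    (hf : DifferentiableAt 𝕜 (Function.uncurry f) (t, x)) (a : F) :
    fderiv 𝕜 (f t) x a = fderiv 𝕜 (Function.uncurry f) (t, x) (0, a) :=
  DFunLike.congr_fun (hf.hasFDerivAt.comp x (hasFDerivAt_prodMk_right t x)).fderiv a

lemma deriv_slice_left {f : 𝕜 → F → G} {t : 𝕜} {x : F}
    (hf : DifferentiableAt 𝕜 (Function.uncurry f) (t, x)) :
    deriv (fun s => f s x) t = fderiv 𝕜 (Function.uncurry f) (t, x) (1, 0) :=
  (HasFDerivAt.comp_hasDerivAt (f := fun s => (s, x)) t hf.hasFDerivAt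
    ((hasDerivAt_id t).prodMk (hasDerivAt_const t x))).deriv

end Slices

section MixedDerivatives

variable {E F : Type*} [NormedAddCommGroup E] [NormedSpace ℝ E]
  [NormedAddCommGroup F] [NormedSpace ℝ F]

lemma fderiv_fderiv_apply_comm {f : E → F} {x : E} (hf : ContDiffAt ℝ 2 f x) (a b : E) :
    fderiv ℝ (fun y => fderiv ℝ f y a) x b = fderiv ℝ (fun y => fderiv ℝ f y b) x a := by
  have hdiff : DifferentiableAt ℝ (fderiv ℝ f) x :=
    (hf.fderiv_right (m := 1) (by norm_num)).differentiableAt (by norm_num)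
  have hsymm : IsSymmSndFDerivAt ℝ f x := hf.isSymmSndFDerivAt (by simp)
  rw [fderiv_clm_apply hdiff (differentiableAt_const a),
    fderiv_clm_apply hdiff (differentiableAt_const b)]
  simpa using hsymm b a

lemma deriv_fderiv_apply_comm {f : ℝ → E → F} (hf : ContDiff ℝ 2 (Function.uncurry f))
    (t : ℝ) (x a : E) :
    deriv (fun s => fderiv ℝ (f s) x a) t
      = fderiv ℝ (fun y => deriv (fun s => f s y) t) x a := by
  have hdiff : Differentiable ℝ (Function.uncurry f) := hf.differentiable (by norm_num)
  have hdiff' (b : ℝ × E) : Differentiable ℝ (fun q => fderiv ℝ (Function.uncurry f) q b) :=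
    ((hf.fderiv_right (m := 1) (by norm_num)).clm_apply contDiff_const).differentiable
      (by norm_num)
  simp only [fderiv_slice_right (hdiff _), deriv_slice_left (hdiff _)]
  calc deriv (fun s => fderiv ℝ (Function.uncurry f) (s, x) (0, a)) t
      = fderiv ℝ (fun q => fderiv ℝ (Function.uncurry f) q (0, a)) (t, x) (1, 0) :=
        deriv_slice_left (f := fun s y => fderiv ℝ (Function.uncurry f) (s, y) (0, a))
          (hdiff' (0, a) (t, x))
    _ = fderiv ℝ (fun q => fderiv ℝ (Function.uncurry f) q (1, 0)) (t, x) (0, a) :=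
        fderiv_fderiv_apply_comm hf.contDiffAt _ _
    _ = fderiv ℝ (fun y => fderiv ℝ (Function.uncurry f) (t, y) (1, 0)) x a :=
        (fderiv_slice_right (f := fun s y => fderiv ℝ (Function.uncurry f) (s, y) (1, 0))
          (hdiff' (1, 0) (t, x)) a).symm

end MixedDerivatives

section PartialDerivative

variable {f g : V3 → ℝ} {x : V3}

lemma pd_add (i : Fin 3) (hf : DifferentiableAt ℝ f x) (hg : DifferentiableAt ℝ g x) :
    pd i (fun y => f y + g y) x = pd i f x + pd i g x := by
  simp only [pd, fderiv_fun_add hf hg, add_apply]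

lemma pd_const_mul (i : Fin 3) (c : ℝ) (hf : DifferentiableAt ℝ f x) :
    pd i (fun y => c * f y) x = c * pd i f x := by
  simp only [pd, fderiv_const_mul hf, smul_apply, smul_eq_mul]

lemma pd_neg (i : Fin 3) (f : V3 → ℝ) (x : V3) : pd i (fun y => -f y) x = -pd i f x := by
  simp only [pd, fderiv_fun_neg, neg_apply]

lemma pd_mul (i : Fin 3) (hf : DifferentiableAt ℝ f x) (hg : DifferentiableAt ℝ g x) :
    pd i (fun y => f y * g y) x = pd i f x * g x + f x * pd i g x := by
  simp only [pd, fderiv_fun_mul hf hg, add_apply, smul_apply, smul_eq_mul]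
  ring

lemma pd_sum {ι : Type*} {s : Finset ι} (i : Fin 3) {f : ι → V3 → ℝ}
    (hf : ∀ j ∈ s, DifferentiableAt ℝ (f j) x) :
    pd i (fun y => ∑ j ∈ s, f j y) x = ∑ j ∈ s, pd i (f j) x := by
  simp only [pd, fderiv_fun_sum hf, sum_apply]

lemma pd_comm (i j : Fin 3) (hf : ContDiffAt ℝ 2 f x) :
    pd i (fun y => pd j f y) x = pd j (fun y => pd i f y) x :=
  fderiv_fderiv_apply_comm hf _ _

lemma contDiff_pd {m n : WithTop ℕ∞} (i : Fin 3) (hf : ContDiff ℝ n f) (hmn : m + 1 ≤ n) :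
    ContDiff ℝ m (pd i f) :=
  (hf.fderiv_right hmn).clm_apply contDiff_const

end PartialDerivative

section VectorCalculus

variable {f : V3 → ℝ} {u v : V3 → V3} {M N : V3 → Fin 3 → Fin 3 → ℝ} {x : V3}

lemma contDiff_grad {m n : WithTop ℕ∞} (hf : ContDiff ℝ n f) (hmn : m + 1 ≤ n) :
    ContDiff ℝ m (grad f) :=
  contDiff_pi.2 fun i => contDiff_pd i hf hmn

lemma contDiff_jacb {m n : WithTop ℕ∞} (hu : ContDiff ℝ n u) (hmn : m + 1 ≤ n) :
    ContDiff ℝ m (jacb u) :=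
  contDiff_pi.2 fun i => contDiff_pi.2 fun j => contDiff_pd j (contDiff_pi.1 hu i) hmn

lemma smul_grad_log (hf : DifferentiableAt ℝ f x) (hx : f x ≠ 0) :
    f x • grad (fun y => Real.log (f y)) x = grad f x := by
  funext i
  simp [grad, pd, fderiv.log hf hx, hx]

lemma mdiv_add (hM : DifferentiableAt ℝ M x) (hN : DifferentiableAt ℝ N x) :
    mdiv (M + N) x = mdiv M x + mdiv N x := by
  funext i
  simp only [mdiv, Pi.add_apply, ← Finset.sum_add_distrib]
  exact Finset.sum_congr rfl fun j _ => pd_add j (by fun_prop) (by fun_prop)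

lemma mdiv_const_smul (c : ℝ) (hM : DifferentiableAt ℝ M x) :
    mdiv (c • M) x = c • mdiv M x := by
  funext i
  simp only [mdiv, Pi.smul_apply, smul_eq_mul, Finset.mul_sum]
  exact Finset.sum_congr rfl fun j _ => pd_const_mul j c (by fun_prop)

lemma grad_vdiv (hu : ContDiff ℝ 2 u) (x : V3) :
    grad (vdiv u) x = mdiv (fun y i j => jacb u y j i) x := by
  have hcomp (j : Fin 3) : ContDiff ℝ 2 (fun y => u y j) := contDiff_pi.1 hu j
  funext i
  calc pd i (fun y => ∑ j, pd j (fun z => u z j) y) x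
      = ∑ j, pd i (fun y => pd j (fun z => u z j) y) x :=
        pd_sum i fun j _ => (contDiff_pd (m := 1) j (hcomp j) (by norm_num)).differentiable
          (by norm_num) x
    _ = ∑ j, pd j (fun y => pd i (fun z => u z j) y) x :=
        Finset.sum_congr rfl fun j _ => pd_comm i j (hcomp j).contDiffAt

lemma jacb_add (hu : DifferentiableAt ℝ u x) (hv : DifferentiableAt ℝ v x) :
    jacb (u + v) x = jacb u x + jacb v x := by
  funext i j
  exact pd_add j (by fun_prop) (by fun_prop)

lemma jacb_const_smul (c : ℝ) (hu : DifferentiableAt ℝ u x) :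
    jacb (c • u) x = c • jacb u x := by
  funext i j
  exact pd_const_mul j c (by fun_prop)

lemma jacb_smul (hf : DifferentiableAt ℝ f x) (hu : DifferentiableAt ℝ u x) (i j : Fin 3) :
    jacb (fun y => f y • u y) x i j = grad f x j * u x i + f x * jacb u x i j :=
  pd_mul j hf (by fun_prop)

lemma jacb_grad_symm (hf : ContDiffAt ℝ 2 f x) (i j : Fin 3) :
    jacb (grad f) x i j = jacb (grad f) x j i :=
  pd_comm j i hf

lemma asymJ_add_const_smul_grad (c : ℝ) (hu : DifferentiableAt ℝ u x) (hf : ContDiff ℝ 2 f) :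
    asymJ (u + c • grad f) x = asymJ u x := by
  have hgrad : DifferentiableAt ℝ (grad f) x :=
    (contDiff_grad (m := 1) hf (by norm_num)).differentiable (by norm_num) x
  funext i j
  simp only [asymJ, jacb_add hu (hgrad.const_smul c), jacb_const_smul c hgrad, Pi.add_apply,
    Pi.smul_apply, smul_eq_mul, jacb_grad_symm hf.contDiffAt i j]
  ring

lemma mdiv_mul_symJ (hf : DifferentiableAt ℝ f x) (hu : DifferentiableAt ℝ (jacb u) x) :
    mdiv (fun y i j => f y * symJ u y i j) x
      = mdiv (fun y i j => f y * asymJ u y i j) x + mdiv (fun y i j => f y * jacb u y j i) x := by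
  have hsplit : (fun y i j => f y * symJ u y i j)
      = (fun y i j => f y * asymJ u y i j) + (fun y i j => f y * jacb u y j i) := by
    funext y i j
    simp only [symJ, asymJ, Pi.add_apply]
    ring
  rw [hsplit]
  exact mdiv_add (by unfold asymJ; fun_prop) (by fun_prop)

lemma mdiv_flux_of_eq_add {w g : V3 → V3} {c : ℝ} (hf : DifferentiableAt ℝ f x)
    (hu : DifferentiableAt ℝ u x) (hv : DifferentiableAt ℝ v x) (hg : DifferentiableAt ℝ g x)
    (hflux : ∀ y, f y • w y = f y • v y + c • g y) :
    mdiv (fun y i j => f y * w y i * u y j) x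
      = mdiv (fun y i j => f y * v y i * u y j) x + c • mdiv (fun y i j => g y i * u y j) x := by
  have hsplit : (fun y i j => f y * w y i * u y j)
      = (fun y i j => f y * v y i * u y j) + c • fun y i j => g y i * u y j := by
    funext y i j
    have hfluxᵢ : f y * w y i = f y * v y i + c * g y i := congrFun (hflux y) i
    simp only [hfluxᵢ, Pi.add_apply, Pi.smul_apply, smul_eq_mul]
    ring
  rw [hsplit, mdiv_add (by fun_prop) (DifferentiableAt.const_smul (by fun_prop) c),
    mdiv_const_smul c (by fun_prop)]

end VectorCalculus

lemma deriv_flux_of_eq_add {ι : Type*} [Finite ι] {r : ℝ → ℝ} {u w g : ℝ → ι → ℝ} {c t : ℝ}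
    (hr : DifferentiableAt ℝ r t) (hu : DifferentiableAt ℝ u t) (hg : DifferentiableAt ℝ g t)
    (hflux : ∀ s, r s • w s = r s • u s + c • g s) :
    (fun i => deriv (fun s => r s * w s i) t)
      = (fun i => deriv (fun s => r s * u s i) t) + c • fun i => deriv (fun s => g s i) t := by
  cases nonempty_fintype ι
  funext i
  have hfluxᵢ (s : ℝ) : r s * w s i = r s * u s i + c * g s i := congrFun (hflux s) i
  simp only [hfluxᵢ, Pi.add_apply, Pi.smul_apply, smul_eq_mul]
  rw [deriv_fun_add (by fun_prop) (by fun_prop), deriv_const_mul _ (by fun_prop)]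

section CompressibleFlow

variable {ρ : ℝ → V3 → ℝ} {u : ℝ → V3 → V3}

lemma contDiff_grad_time {m n : WithTop ℕ∞} (hρ : ContDiff ℝ n (Function.uncurry ρ))
    (hmn : m + 1 ≤ n) (x : V3) : ContDiff ℝ m (fun t => grad (ρ t) x) :=
  contDiff_pi.2 fun _ => hρ.fderiv_apply contDiff_const contDiff_const hmn

lemma deriv_grad_of_continuity (hρ : ContDiff ℝ 2 (Function.uncurry ρ)) {t : ℝ}
    (hu : ContDiff ℝ 2 (u t))
    (hcont : ∀ x, deriv (fun s => ρ s x) t + vdiv (fun y => ρ t y • u t y) x = 0) (x : V3) :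
    (fun i => deriv (fun s => grad (ρ s) x i) t)
      = -(mdiv (fun y i j => grad (ρ t) y i * u t y j) x
          + mdiv (fun y i j => ρ t y * jacb (u t) y j i) x) := by
  have hρt : ContDiff ℝ 2 (ρ t) := hρ.comp (contDiff_prodMk_right t)
  have hρd : Differentiable ℝ (ρ t) := hρt.differentiable (by norm_num)
  have hud : Differentiable ℝ (u t) := hu.differentiable (by norm_num)
  have hgrad : Differentiable ℝ (grad (ρ t)) :=
    (contDiff_grad (m := 1) hρt (by norm_num)).differentiable (by norm_num)
  have hjacb : Differentiable ℝ (jacb (u t)) :=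
    (contDiff_jacb (m := 1) hu (by norm_num)).differentiable (by norm_num)
  have hdensity : (fun y => deriv (fun s => ρ s y) t)
      = fun y => -vdiv (fun z => ρ t z • u t z) y :=
    funext fun y => eq_neg_of_add_eq_zero_left (hcont y)
  calc (fun i => deriv (fun s => grad (ρ s) x i) t)
      = grad (fun y => deriv (fun s => ρ s y) t) x :=
        funext fun _ => deriv_fderiv_apply_comm hρ t x _
    _ = -grad (vdiv fun z => ρ t z • u t z) x := by
        rw [hdensity]
        exact funext fun i => pd_neg i _ x
    _ = -mdiv (fun y i j => jacb (fun z => ρ t z • u t z) y j i) x := by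
        rw [grad_vdiv (u := fun z => ρ t z • u t z) (hρt.smul hu)]
    _ = -mdiv ((fun y i j => grad (ρ t) y i * u t y j)
          + fun y i j => ρ t y * jacb (u t) y j i) x := by
        simp only [jacb_smul (hρd _) (hud _)]
        rfl
    _ = _ := by rw [mdiv_add (by fun_prop) (by fun_prop)]

end CompressibleFlow

theorem augmented_momentum_equation_general (ν : ℝ) (ρ : ℝ → V3 → ℝ) (u v w : ℝ → V3 → V3)
    (hρ : ContDiff ℝ 2 (fun p : ℝ × V3 => ρ p.1 p.2))
    (hu : ContDiff ℝ 2 (fun p : ℝ × V3 => u p.1 p.2))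
    (hpos : ∀ t x, 0 < ρ t x)
    (hcont : ∀ t x, deriv (fun s => ρ s x) t + vdiv (fun y => ρ t y • u t y) x = 0)
    (hv : ∀ t x, v t x = (2 * ν) • grad (fun y => Real.log (ρ t y)) x)
    (hw : ∀ t x, w t x = u t x + v t x) :
    (∀ t x,
      (fun i => deriv (fun s => ρ s x * w s x i) t)
        + mdiv (fun y i j => ρ t y * w t y i * u t y j) x
        - (2 * ν) • mdiv (fun y i j => ρ t y * asymJ (u t) y i j) x
      = (fun i => deriv (fun s => ρ s x * u s x i) t)
        + mdiv (fun y i j => ρ t y * u t y i * u t y j) x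
        - (2 * ν) • mdiv (fun y i j => ρ t y * symJ (u t) y i j) x)
    ∧ (∀ t x, asymJ (w t) x = asymJ (u t) x) := by
  have hρt (t : ℝ) : ContDiff ℝ 2 (ρ t) := hρ.comp (contDiff_prodMk_right t)
  have hut (t : ℝ) : ContDiff ℝ 2 (u t) := hu.comp (contDiff_prodMk_right t)
  have hρd (t : ℝ) : Differentiable ℝ (ρ t) := (hρt t).differentiable (by norm_num)
  have hud (t : ℝ) : Differentiable ℝ (u t) := (hut t).differentiable (by norm_num)
  have hflux (t : ℝ) (x : V3) : ρ t x • w t x = ρ t x • u t x + (2 * ν) • grad (ρ t) x := by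
    rw [hw, hv, ← smul_grad_log (hρd t x) (hpos t x).ne', smul_add, smul_comm]
  refine ⟨fun t x => ?_, fun t x => ?_⟩
  · have hρ_time : Differentiable ℝ (fun s => ρ s x) :=
      (hρ.comp (contDiff_prodMk_left x)).differentiable (by norm_num)
    have hu_time : Differentiable ℝ (fun s => u s x) :=
      (hu.comp (contDiff_prodMk_left x)).differentiable (by norm_num)
    have hgrad : Differentiable ℝ (grad (ρ t)) :=
      (contDiff_grad (m := 1) (hρt t) (by norm_num)).differentiable (by norm_num)
    have hgrad_time : Differentiable ℝ (fun s => grad (ρ s) x) :=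
      (contDiff_grad_time (m := 1) hρ (by norm_num) x).differentiable (by norm_num)
    have hjacb : Differentiable ℝ (jacb (u t)) :=
      (contDiff_jacb (m := 1) (hut t) (by norm_num)).differentiable (by norm_num)
    rw [deriv_flux_of_eq_add (hρ_time t) (hu_time t) (hgrad_time t) fun s => hflux s x,
      mdiv_flux_of_eq_add (hρd t x) (hud t x) (hud t x) (hgrad x) (hflux t),
      deriv_grad_of_continuity hρ (hut t) (hcont t), mdiv_mul_symJ (hρd t x) (hjacb x)]
    module
  · have heffective : w t = u t + (2 * ν) • grad (fun y => Real.log (ρ t y)) :=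
      funext fun y => by rw [hw, hv]; rfl
    rw [heffective,
      asymJ_add_const_smul_grad _ (hud t x) ((hρt t).log fun y => (hpos t y).ne')]

/-- the effective velocity `w = u + 2ν ∇ log ρ` satisfies the
augmented momentum equation, and `Aw = Au`. -/
theorem augmented_momentum_equation
    (ν κ γ : ℝ) (hν : 0 < ν) (hκ : 0 < κ) (hγ : 1 < γ)
    (ρ : ℝ → V3 → ℝ) (u : ℝ → V3 → V3)
    (hρ : ContDiff ℝ 3 (fun p : ℝ × V3 => ρ p.1 p.2))
    (hu : ContDiff ℝ 3 (fun p : ℝ × V3 => u p.1 p.2))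
    (hpos : ∀ t x, 0 < ρ t x)
    (hcont : ∀ t x, deriv (fun s => ρ s x) t + vdiv (fun y => ρ t y • u t y) x = 0)
    (hmom : ∀ t x,
      (fun i => deriv (fun s => ρ s x * u s x i) t)
        + mdiv (fun y i j => ρ t y * u t y i * u t y j) x
        + grad (fun y => ρ t y ^ γ) x
        - (2 * ν) • mdiv (fun y i j => ρ t y * symJ (u t) y i j) x
        - (2 * κ ^ 2) • (ρ t x • grad (fun y => lap (ρ t) y) x)
      = 0)
    (v w : ℝ → V3 → V3)
    (hv : ∀ t x, v t x = (2 * ν) • grad (fun y => Real.log (ρ t y)) x)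
    (hw : ∀ t x, w t x = u t x + v t x) :
    (∀ t x,
      (fun i => deriv (fun s => ρ s x * w s x i) t)
        + mdiv (fun y i j => ρ t y * w t y i * u t y j) x
        + grad (fun y => ρ t y ^ γ) x
        - (2 * ν) • mdiv (fun y i j => ρ t y * asymJ (u t) y i j) x
        - (2 * κ ^ 2) • (ρ t x • grad (fun y => lap (ρ t) y) x)
      = 0)
    ∧ (∀ t x, asymJ (w t) x = asymJ (u t) x) := by
  obtain ⟨hbalance, hasym⟩ := augmented_momentum_equation_general ν ρ u v w
    (hρ.of_le (by norm_num)) (hu.of_le (by norm_num)) hpos hcont hv hw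
  exact ⟨fun t x => by linear_combination (exp := 1) hbalance t x + hmom t x, hasym⟩
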